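/- arXiv:0909.4232 — 2 statements merged into one kernel-verified Lean document; each statement's English description precedes it below -/
import Mathlib

section
/- Orthogonality of the Macdonald functions of imaginary order (main result, ν, ν' > 0): fix a real ν > 0. For every smooth compactly supported test function φ : ℝ → ℝ with support contained in (0, ∞), lim_{ξ → 0+} ∫_0^∞ φ(ν') · ( ∫_ξ^∞ K_{iν}(x) K_{iν'}(x) / x dx ) dν' = (π² / (2 ν sinh(πν))) · φ(ν). This is the precise distributional meaning of the orthogonality relation ∫_0^∞ K_{iν}(x) K_{iν'}(x)/x dx = (π²/(2ν sinh(πν))) · δ(ν − ν') for ν, ν' > 0. -/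
open Real Filter MeasureTheory

/-- The Macdonald function of imaginary order: `K_{iν}(x) = ∫_0^∞ e^{-x cosh t} cos(ν t) dt`. -/
noncomputable def Kim (ν x : ℝ) : ℝ :=
  ∫ t in Set.Ioi (0 : ℝ), Real.exp (-x * Real.cosh t) * Real.cos (ν * t)

lemma sig_deriv_eq (s : ℝ) : Real.sigmoid s * (1 - Real.sigmoid s) = 1 / (2 * (Real.cosh s + 1)) := by
  rw [Real.sigmoid_def, Real.cosh_eq, Real.exp_neg]
  have := Real.exp_pos s
  field_simp
  ring

lemma sig_sub_eq (s t : ℝ) : Real.sigmoid (s + t) - Real.sigmoid (s - t)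
    = Real.sinh t / (Real.cosh s + Real.cosh t) := by
  rw [Real.sigmoid_def, Real.sigmoid_def, Real.cosh_eq, Real.cosh_eq, Real.sinh_eq, neg_add, neg_sub,
    Real.exp_add, Real.exp_sub, Real.exp_neg, Real.exp_neg]
  have := Real.exp_pos s
  have := Real.exp_pos t
  field_simp
  ring

lemma sig_integrable : Integrable (fun s : ℝ => Real.sigmoid s * (1 - Real.sigmoid s)) := by
  have h := MeasureTheory.integrableOn_image_iff_integrableOn_abs_deriv_smul (s := Set.univ)
    (f := Real.sigmoid) (f' := fun s => Real.sigmoid s * (1 - Real.sigmoid s)) MeasurableSet.univ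
    (fun x _ => (Real.hasDerivAt_sigmoid x).hasDerivWithinAt) Real.sigmoid_injective.injOn (fun _ => (1:ℝ))
  rw [Set.image_univ, Real.range_sigmoid, integrableOn_univ] at h
  have h2 := h.1 (by simp [integrableOn_const_iff])
  refine h2.congr (ae_of_all _ fun s => ?_)
  have h1 := Real.sigmoid_pos s
  have h3 := Real.sigmoid_lt_one s
  simp only [smul_eq_mul, mul_one]
  rw [abs_of_nonneg]
  exact mul_nonneg h1.le (by linarith)

lemma log_sig (s : ℝ) : Real.log (Real.sigmoid s) - Real.log (1 - Real.sigmoid s) = s := by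
  have h1 := Real.sigmoid_pos s
  have h3 := Real.sigmoid_lt_one s
  rw [← Real.sigmoid_neg, ← Real.sigmoid_mul_rexp_neg, Real.log_mul h1.ne' (Real.exp_pos _).ne',
    Real.log_exp]
  ring

lemma sig_fourier (ν : ℝ) (hν : 0 < ν) :
    ∫ s : ℝ, Real.cos (ν * s) * (Real.sigmoid s * (1 - Real.sigmoid s)) = π * ν / Real.sinh (π * ν) := by
  have key : ∫ s : ℝ, Complex.exp (Complex.I * ν * s) * ((Real.sigmoid s * (1 - Real.sigmoid s) : ℝ) : ℂ)
      = ((π * ν / Real.sinh (π * ν) : ℝ) : ℂ) := by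
    have h := MeasureTheory.integral_image_eq_integral_abs_deriv_smul (s := Set.univ)
      (f := Real.sigmoid) (f' := fun s => Real.sigmoid s * (1 - Real.sigmoid s)) MeasurableSet.univ
      (fun x _ => (Real.hasDerivAt_sigmoid x).hasDerivWithinAt) Real.sigmoid_injective.injOn
      (fun x : ℝ => (x : ℂ) ^ (1 + Complex.I * ν - 1) * (1 - (x:ℂ)) ^ (1 - Complex.I * ν - 1))
    rw [Set.image_univ, Real.range_sigmoid, Measure.restrict_univ, ← integral_Ioc_eq_integral_Ioo,
      ← intervalIntegral.integral_of_le zero_le_one] at h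
    have hB : Complex.betaIntegral (1 + Complex.I * ν) (1 - Complex.I * ν)
        = ((π * ν / Real.sinh (π * ν) : ℝ) : ℂ) := by
      have h1 := Complex.Gamma_mul_Gamma_eq_betaIntegral (s := 1 + Complex.I * ν)
        (t := 1 - Complex.I * ν) (by simp) (by simp)
      have h2 := Complex.Gamma_mul_Gamma_one_sub (Complex.I * ν)
      have hne : Complex.I * (ν:ℂ) ≠ 0 := by simp [hν.ne']
      have h3 := Complex.Gamma_add_one _ hne
      have h4 : (1 + Complex.I * ν) + (1 - Complex.I * ν) = (2:ℂ) := by ring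
      have h5 : Complex.Gamma 2 = 1 := by
        have := Complex.Gamma_nat_eq_factorial 1
        rw [show ((1:ℕ):ℂ) + 1 = 2 by norm_num] at this
        rw [this]; simp
      rw [h4, h5, one_mul, add_comm 1 (Complex.I * (ν:ℂ)), h3, mul_assoc, h2] at h1
      rw [add_comm 1 (Complex.I * (ν:ℂ)), ← h1]
      have h6 : (π : ℂ) * (Complex.I * ν) = (π * ν) * Complex.I := by ring
      rw [h6, Complex.sin_mul_I]
      push_cast
      have : Complex.sinh (π * ν) ≠ 0 := by
        rw [← Complex.ofReal_mul, ← Complex.ofReal_sinh]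
        exact_mod_cast (Real.sinh_pos_iff.2 (by positivity)).ne'
      field_simp
    rw [← hB, Complex.betaIntegral, h]
    refine integral_congr_ae (ae_of_all _ fun s => ?_)
    have h1 := Real.sigmoid_pos s
    have h3 := Real.sigmoid_lt_one s
    have h4 : 0 < 1 - Real.sigmoid s := by linarith
    simp only
    rw [abs_of_nonneg (mul_nonneg h1.le h4.le), Complex.real_smul, mul_comm]
    congr 1
    rw [Complex.cpow_def_of_ne_zero (by exact_mod_cast h1.ne'),
      Complex.cpow_def_of_ne_zero (by exact_mod_cast h4.ne'), ← Complex.exp_add,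
      ← Complex.ofReal_one, ← Complex.ofReal_sub, ← Complex.ofReal_log h1.le, ← Complex.ofReal_log h4.le]
    congr 1
    conv_lhs => rw [← log_sig s]
    push_cast
    ring
  have := congrArg Complex.re key
  rw [Complex.ofReal_re] at this
  rw [← this]
  have hint : Integrable (fun s : ℝ => Complex.exp (Complex.I * ν * s) *
      ((Real.sigmoid s * (1 - Real.sigmoid s) : ℝ) : ℂ)) := by
    refine (sig_integrable.ofReal (𝕜 := ℂ)).bdd_mul (c := 1) (by fun_prop) (ae_of_all _ fun s => ?_)
    rw [show Complex.I * ν * s = ((ν * s : ℝ) : ℂ) * Complex.I by push_cast; ring,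
      Complex.norm_exp_ofReal_mul_I]
  have h7 := integral_re hint
  simp only [RCLike.re_eq_complex_re] at h7
  rw [← h7]
  refine integral_congr_ae (ae_of_all _ fun s => ?_)
  simp only
  rw [show Complex.I * ν * s = ((ν * s : ℝ) : ℂ) * Complex.I by push_cast; ring,
    Complex.re_mul_ofReal, Complex.exp_ofReal_mul_I_re]

lemma kernel_integrable (ν t : ℝ) (ht : 0 ≤ t) :
    Integrable (fun s : ℝ => Real.cos (ν * s) * (Real.sinh t / (Real.cosh s + Real.cosh t))) := by
  have h1 : ∀ s : ℝ, Real.cosh s + Real.cosh t ≠ 0 := fun s => by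
    have := Real.cosh_pos s
    have := Real.cosh_pos t
    positivity
  refine (sig_integrable.const_mul (2 * Real.sinh t)).mono' ?_ (ae_of_all _ fun s => ?_)
  · exact Continuous.aestronglyMeasurable (by fun_prop (disch := exact h1 _))
  · rw [norm_mul, sig_deriv_eq]
    have h0 := Real.sinh_nonneg_iff.2 ht
    have h2 := Real.cosh_pos s
    have h3 := Real.one_le_cosh t
    calc _ ≤ 1 * ‖Real.sinh t / (Real.cosh s + Real.cosh t)‖ := by
          gcongr; exact Real.abs_cos_le_one _
      _ = Real.sinh t / (Real.cosh s + Real.cosh t) := by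
          rw [one_mul, Real.norm_of_nonneg (by positivity)]
      _ ≤ Real.sinh t / (Real.cosh s + 1) := by gcongr
      _ = _ := by field_simp

lemma kernel_full (ν t : ℝ) (hν : 0 < ν) (ht : 0 ≤ t) :
    ∫ s : ℝ, Real.cos (ν * s) * (Real.sinh t / (Real.cosh s + Real.cosh t))
      = 2 * π * Real.sin (ν * t) / Real.sinh (π * ν) := by
  set D : ℝ → ℝ := fun s => Real.sigmoid s * (1 - Real.sigmoid s) with hD
  have hDi : Integrable D := sig_integrable
  have hmul : ∀ (g : ℝ → ℝ) (f : ℝ → ℝ), Integrable f → Continuous g → (∀ s, |g s| ≤ 1) →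
      Integrable (fun s => g s * f s) := fun g f hf hg hb =>
    hf.bdd_mul (c := 1) hg.aestronglyMeasurable (ae_of_all _ hb)
  have hv : ∀ s, HasDerivAt (fun s => Real.sigmoid (s + t) - Real.sigmoid (s - t))
      (D (s + t) - D (s - t)) s := fun s =>
    ((Real.hasDerivAt_sigmoid (s + t)).comp_add_const s t).sub
      ((Real.hasDerivAt_sigmoid (s - t)).comp_sub_const s t)
  have hu : ∀ s, HasDerivAt (fun s => Real.sin (ν * s) / ν) (Real.cos (ν * s)) s := fun s => by
    have := ((hasDerivAt_id s).const_mul ν).sin.div_const ν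
    simp only [id, mul_one] at this
    rwa [mul_div_assoc, div_self hν.ne', mul_one] at this
  have hDp : Integrable (fun s => D (s + t)) := hDi.comp_add_right t
  have hDm : Integrable (fun s => D (s - t)) := hDi.comp_sub_right t
  have hvi : Integrable (fun s => Real.sigmoid (s + t) - Real.sigmoid (s - t)) := by
    simp_rw [sig_sub_eq]
    simpa using kernel_integrable 0 t ht
  have hsin : ∀ f : ℝ → ℝ, Integrable f → Integrable (fun s => Real.sin (ν * s) / ν * f s) := by
    intro f hf
    have := (hmul (fun s => Real.sin (ν * s)) f hf (by fun_prop) (fun s => Real.abs_sin_le_one _)).const_mul (1/ν)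
    refine this.congr (ae_of_all _ fun s => ?_)
    simp only; ring
  have hip := integral_mul_deriv_eq_deriv_mul_of_integrable (fun x _ => hu x) (fun x _ => hv x)
    (hsin _ (hDp.sub hDm))
    (hmul _ _ hvi (by fun_prop) (fun s => Real.abs_cos_le_one _)) (hsin _ hvi)
  simp_rw [sig_sub_eq] at hip
  have e1 : ∫ s : ℝ, Real.cos (ν * s) * (Real.sinh t / (Real.cosh s + Real.cosh t))
    = - ∫ x, Real.sin (ν * x) / ν * (D (x + t) - D (x - t)) := by
    rw [hip, neg_neg]
  rw [e1]
  have e2 : ∫ x, Real.sin (ν * x) / ν * (D (x + t) - D (x - t)) =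
     (∫ x, Real.sin (ν * x) / ν * D (x + t)) - ∫ x, Real.sin (ν * x) / ν * D (x - t) := by
    rw [← integral_sub (hsin _ hDp) (hsin _ hDm)]
    simp_rw [mul_sub]
  have e3 : ∫ x, Real.sin (ν * x) / ν * D (x + t) = ∫ x, Real.sin (ν * (x - t)) / ν * D x := by
    rw [← integral_add_right_eq_self (fun x => Real.sin (ν * (x - t)) / ν * D x) t]
    simp
  have e4 : ∫ x, Real.sin (ν * x) / ν * D (x - t) = ∫ x, Real.sin (ν * (x + t)) / ν * D x := by
    rw [← integral_sub_right_eq_self (fun x => Real.sin (ν * (x + t)) / ν * D x) t]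
    simp
  have hint : ∀ c : ℝ, Integrable (fun x => Real.sin (ν * (x + c)) / ν * D x) := by
    intro c
    have := (hmul (fun s => Real.sin (ν * (s + c))) D hDi (by fun_prop) (fun s => Real.abs_sin_le_one _)).const_mul (1/ν)
    refine this.congr (ae_of_all _ fun s => ?_)
    simp only; ring
  rw [e2, e3, e4, ← integral_sub (by simpa [sub_eq_add_neg] using hint (-t)) (hint t), ← integral_neg]
  have e5 : ∀ x, -(Real.sin (ν * (x - t)) / ν * D x - Real.sin (ν * (x + t)) / ν * D x)
     = (2 * Real.sin (ν * t) / ν) * (Real.cos (ν * x) * D x) := by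
    intro x
    rw [mul_sub, mul_add, Real.sin_sub, Real.sin_add]
    ring
  simp_rw [e5]
  rw [integral_const_mul, sig_fourier ν hν]
  field_simp

lemma kernel_half (ν t : ℝ) (hν : 0 < ν) (ht : 0 ≤ t) :
    ∫ s in Set.Ioi (0:ℝ), Real.cos (ν * s) * (Real.sinh t / (Real.cosh s + Real.cosh t))
      = π * Real.sin (ν * t) / Real.sinh (π * ν) := by
  have h := integral_comp_abs (f := fun s => Real.cos (ν * s) * (Real.sinh t / (Real.cosh s + Real.cosh t)))
  have h2 : ∀ s : ℝ, Real.cos (ν * |s|) * (Real.sinh t / (Real.cosh |s| + Real.cosh t))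
     = Real.cos (ν * s) * (Real.sinh t / (Real.cosh s + Real.cosh t)) := fun s => by
    rcases abs_choice s with h | h <;> rw [h] 
    simp
  simp only [h2] at h
  rw [kernel_full ν t hν ht] at h
  linarith [show 2 * (π * Real.sin (ν * t) / Real.sinh (π * ν)) = 2 * π * Real.sin (ν * t) / Real.sinh (π * ν) by ring]
open FourierTransform in
lemma sine_transform (ψ : ℝ → ℝ) (hψ : ContDiff ℝ (⊤ : ℕ∞) ψ) (hc : HasCompactSupport ψ)
    (h0 : ∀ v ≤ 0, ψ v = 0) (h : ℝ → ℝ) (hh : h = fun t => ∫ v in Set.Ioi (0:ℝ), ψ v * Real.sin (v * t)) :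
    Continuous h ∧ Integrable (fun t => (1 + t ^ 2) * |h t|) ∧
    ∀ ν, 0 < ν → ∫ t in Set.Ioi (0:ℝ), h t * Real.sin (ν * t) = π / 2 * ψ ν := by
  have hcC : HasCompactSupport (fun v => (ψ v : ℂ)) := hc.comp_left (g := Complex.ofReal) (by simp)
  have hsC : ContDiff ℝ (⊤ : ℕ∞) (fun v => (ψ v : ℂ)) := Complex.ofRealCLM.contDiff.comp hψ
  set f : SchwartzMap ℝ ℂ := hcC.toSchwartzMap hsC with hf
  have hfv : ∀ v, f v = (ψ v : ℂ) := fun v => rfl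
  have hFw : ∀ w, (𝓕 f) w = ∫ v : ℝ, Complex.exp (↑(-2 * π * v * w) * Complex.I) • f v := fun w => by
    rw [SchwartzMap.fourier_coe, Real.fourier_real_eq_integral_exp_smul]
  have hψi : Integrable ψ := hψ.continuous.integrable_of_hasCompactSupport hc
  have hhF : ∀ w, h (2 * π * w) = -((𝓕 f) w).im := by
    intro w
    have hint : Integrable (fun v : ℝ => Complex.exp (↑(-2 * π * v * w) * Complex.I) • f v) := by
      refine (f.integrable (μ := volume)).bdd_mul (c := 1) (by fun_prop) (ae_of_all _ fun s => ?_)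
      rw [Complex.norm_exp_ofReal_mul_I]
    have h7 := integral_im hint
    simp only [RCLike.im_eq_complex_im] at h7
    rw [hFw, ← h7, ← integral_neg, hh]
    simp only
    rw [setIntegral_eq_integral_of_forall_compl_eq_zero]
    · refine integral_congr_ae (ae_of_all _ fun v => ?_)
      simp only [hfv, smul_eq_mul]
      rw [Complex.im_mul_ofReal, Complex.exp_ofReal_mul_I_im,
        show -2 * π * v * w = -(v * (2 * π * w)) by ring, Real.sin_neg]
      ring
    · intro v hv
      rw [h0 v (by simpa using hv), zero_mul]
  have hpi : 2 * π ≠ 0 := by positivity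
  have hhF' : ∀ t, h t = -((𝓕 f) (t / (2 * π))).im := fun t => by
    rw [← hhF]; congr 1; field_simp
  have hodd : ∀ t, h (-t) = - h t := by
    intro t
    simp only [hh]
    rw [← integral_neg]
    simp
  have hcont : Continuous h := by
    have : h = fun t => -((𝓕 f) (t / (2 * π))).im := funext hhF'
    rw [this]
    have := (𝓕 f).continuous
    fun_prop
  have hI : Integrable (fun t => (1 + t ^ 2) * |h t|) := by
    have i0 := (𝓕 f).integrable_pow_mul volume 0
    have i2 := ((𝓕 f).integrable_pow_mul volume 2).const_mul ((2 * π)^2)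
    have i3 := ((i0.add i2).comp_div hpi)
    refine i3.mono' ((by fun_prop : Continuous fun t => (1 + t ^ 2) * |h t|).aestronglyMeasurable)
      (ae_of_all _ fun t => ?_)
    rw [Real.norm_of_nonneg (by positivity)]
    simp only [Pi.add_apply, pow_zero, one_mul, Real.norm_eq_abs, sq_abs]
    have : |h t| ≤ ‖(𝓕 f) (t / (2 * π))‖ := by
      rw [hhF', abs_neg]; exact Complex.abs_im_le_norm _
    calc (1 + t^2) * |h t| ≤ (1 + t^2) * ‖(𝓕 f) (t / (2 * π))‖ := by gcongr
      _ = _ := by field_simp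
  refine ⟨hcont, hI, fun ν hν => ?_⟩
  have hinv : ∀ y : ℝ, (ψ y : ℂ) = ∫ v : ℝ, Complex.exp (↑(2 * π * (y * v)) * Complex.I) • (𝓕 f) v := by
    intro y
    have e : (𝓕⁻ (𝓕 f)) y = f y := by rw [FourierTransform.fourierInv_fourier_eq]
    rw [SchwartzMap.fourierInv_coe, Real.fourierInv_eq'] at e
    rw [← hfv, ← e]
    simp [mul_comm]
  have hint : ∀ y : ℝ, Integrable (fun v : ℝ => Complex.exp (↑(2 * π * (y * v)) * Complex.I) • (𝓕 f) v) := by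
    intro y
    refine ((𝓕 f).integrable (μ := volume)).bdd_mul (c := 1) (by fun_prop) (ae_of_all _ fun s => ?_)
    rw [Complex.norm_exp_ofReal_mul_I]
  have hsub : (ψ ν : ℂ) = ∫ v : ℝ, (Complex.exp (↑(2 * π * (ν * v)) * Complex.I) • (𝓕 f) v
      - Complex.exp (↑(2 * π * (-ν * v)) * Complex.I) • (𝓕 f) v) := by
    rw [integral_sub (hint ν) (hint (-ν)), ← hinv, ← hinv, h0 (-ν) (by linarith)]
    simp
  have hre := congrArg Complex.re hsub
  have h7 := integral_re ((hint ν).sub (hint (-ν)))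
  simp only [RCLike.re_eq_complex_re, Pi.sub_apply] at h7
  rw [Complex.ofReal_re, ← h7] at hre
  have h8 : ψ ν = ∫ v : ℝ, 2 * (h (2 * π * v) * Real.sin (ν * (2 * π * v))) := by
    rw [hre]
    refine integral_congr_ae (ae_of_all _ fun v => ?_)
    simp only [smul_eq_mul, Complex.sub_re, Complex.mul_re]
    rw [Complex.exp_ofReal_mul_I_im, Complex.exp_ofReal_mul_I_im, Complex.exp_ofReal_mul_I_re,
      Complex.exp_ofReal_mul_I_re, hhF, show 2 * π * (-ν * v) = -(2 * π * (ν * v)) by ring, Real.sin_neg,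
      Real.cos_neg, show ν * (2 * π * v) = 2 * π * (ν * v) by ring]
    ring
  rw [integral_const_mul, Measure.integral_comp_mul_left (fun t => h t * Real.sin (ν * t)) (2 * π)] at h8
  have h9 := integral_comp_abs (f := fun t => h t * Real.sin (ν * t))
  have h10 : ∀ t : ℝ, h |t| * Real.sin (ν * |t|) = h t * Real.sin (ν * t) := by
    intro t
    rcases abs_choice t with h | h <;> rw [h]
    rw [hodd, mul_neg, Real.sin_neg]; ring
  simp only [h10] at h9
  rw [h9, abs_of_pos (by positivity)] at h8
  rw [h8, smul_eq_mul]
  field_simp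
lemma exp_cosh_bound (x : ℝ) (hx : 0 < x) (t : ℝ) :
    Real.exp (-x * Real.cosh t) * Real.cosh t ≤ 8 / x ^ 2 * (Real.sigmoid t * (1 - Real.sigmoid t)) := by
  rw [sig_deriv_eq]
  have hc := Real.one_le_cosh t
  have hq := Real.quadratic_le_exp_of_nonneg (x := x * Real.cosh t) (by positivity)
  have hE : Real.exp (-x * Real.cosh t) = (Real.exp (x * Real.cosh t))⁻¹ := by
    rw [← Real.exp_neg]; ring_nf
  rw [hE]
  have hxc : 0 < x * Real.cosh t := by positivity
  calc (Real.exp (x * Real.cosh t))⁻¹ * Real.cosh t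
      ≤ ((x * Real.cosh t) ^ 2 / 2)⁻¹ * Real.cosh t := by
        gcongr
        linarith
    _ = 8 / x ^ 2 * (1 / (4 * Real.cosh t)) := by field_simp; norm_num
    _ ≤ _ := by
        refine mul_le_mul_of_nonneg_left (one_div_le_one_div_of_le (by positivity) ?_) (by positivity)
        linarith

lemma exp_cosh_integrable (x : ℝ) (hx : 0 < x) :
    Integrable (fun t => Real.exp (-x * Real.cosh t) * Real.cosh t) := by
  refine (sig_integrable.const_mul (8 / x ^ 2)).mono' (by fun_prop) (ae_of_all _ fun t => ?_)
  have hc := Real.cosh_pos t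
  rw [Real.norm_of_nonneg (by positivity)]
  exact exp_cosh_bound x hx t

lemma exp_cosh_mul_integrable (x : ℝ) (hx : 0 < x) (g : ℝ → ℝ) (hg : Continuous g)
    (hb : ∀ t, |g t| ≤ Real.cosh t) : Integrable (fun t => Real.exp (-x * Real.cosh t) * g t) := by
  refine (exp_cosh_integrable x hx).mono' (by fun_prop) (ae_of_all _ fun t => ?_)
  rw [norm_mul, Real.norm_of_nonneg (Real.exp_pos _).le]
  gcongr
  exact hb t

lemma abs_sinh_le_cosh (t : ℝ) : |Real.sinh t| ≤ Real.cosh t := by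
  rw [Real.abs_sinh, ← Real.cosh_abs]; exact (Real.sinh_lt_cosh _).le

lemma Kim_div (x v : ℝ) (hx : 0 < x) (hv : 0 < v) :
    Kim v x / x = (1 / v) * ∫ t in Set.Ioi (0:ℝ), Real.exp (-x * Real.cosh t) * Real.sinh t * Real.sin (v * t) := by
  have i1 : Integrable (fun t => Real.exp (-x * Real.cosh t) * Real.cos (v * t)) :=
    exp_cosh_mul_integrable x hx _ (by fun_prop)
      fun t => (Real.abs_cos_le_one _).trans (Real.one_le_cosh t)
  have i2 : Integrable (fun t => Real.exp (-x * Real.cosh t) * Real.sinh t * Real.sin (v * t)) := by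
    have := exp_cosh_mul_integrable x hx (fun t => Real.sinh t * Real.sin (v * t)) (by fun_prop)
      fun t => by
        rw [abs_mul]
        calc _ ≤ Real.cosh t * 1 := by
              gcongr
              · exact abs_sinh_le_cosh t
              · exact Real.abs_sin_le_one _
          _ = _ := mul_one _
    simpa only [mul_assoc] using this
  have hd : ∀ t ∈ Set.Ici (0:ℝ), HasDerivAt (fun t => Real.exp (-x * Real.cosh t) * (Real.sin (v * t) / v))
      (Real.exp (-x * Real.cosh t) * Real.cos (v * t) -
        (x / v) * (Real.exp (-x * Real.cosh t) * Real.sinh t * Real.sin (v * t))) t := by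
    intro t _
    have h1 := ((Real.hasDerivAt_cosh t).const_mul (-x)).exp
    have h2 := ((hasDerivAt_id t).const_mul v).sin.div_const v
    refine (h1.mul h2).congr_deriv ?_
    simp only [id]
    field_simp
    ring
  have hlim : Tendsto (fun t => Real.exp (-x * Real.cosh t) * (Real.sin (v * t) / v)) atTop (nhds 0) := by
    have hz : Tendsto (fun t => Real.exp (-x * Real.cosh t)) atTop (nhds 0) := by
      refine Real.tendsto_exp_atBot.comp ?_
      refine Tendsto.const_mul_atTop_of_neg (by linarith) ?_
      refine tendsto_atTop_mono' atTop (f₁ := fun t => t) ?_ tendsto_id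
      filter_upwards [eventually_ge_atTop 0] with t ht
      exact (Real.self_le_sinh_iff.2 ht).trans (Real.sinh_lt_cosh t).le
    have := bdd_le_mul_tendsto_zero' (1 / v) (f := fun t => Real.sin (v * t) / v) (.of_forall fun t => by
        simp only [abs_div, abs_of_pos hv]
        gcongr
        exact Real.abs_sin_le_one _) hz
    simpa [mul_comm] using this
  have hF := integral_Ioi_of_hasDerivAt_of_tendsto' hd (i1.sub (i2.const_mul (x/v))).integrableOn hlim
  rw [integral_sub i1.integrableOn (i2.const_mul (x/v)).integrableOn, integral_const_mul] at hF
  simp only [mul_zero, Real.sin_zero, zero_div, sub_zero] at hF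
  have hF' : Kim v x = x / v * ∫ t in Set.Ioi (0:ℝ), Real.exp (-x * Real.cosh t) * Real.sinh t * Real.sin (v * t) := by
    unfold Kim; linarith
  rw [hF']
  field_simp

lemma kernel_bound (s t : ℝ) (hs : 0 < s) (ht : 0 < t) :
    Real.sinh t / (Real.cosh s + Real.cosh t) ≤ 4 * ((1 + t ^ 2) * (1 + s ^ 2)⁻¹) := by
  have h1 : Real.sinh t / (Real.cosh s + Real.cosh t) ≤ 1 / (1 + Real.exp (s - t)) := by
    have := Real.cosh_pos s
    have := Real.cosh_pos t
    rw [div_le_div_iff₀ (by positivity) (by positivity), Real.exp_sub, Real.sinh_eq, Real.cosh_eq,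
      Real.cosh_eq, Real.exp_neg, Real.exp_neg]
    have hs := Real.exp_pos s
    have ht := Real.exp_pos t
    field_simp
    have : 0 < Real.exp s * Real.exp t := by positivity
    have : 0 < Real.exp s ^ 2 := by positivity
    nlinarith
  refine h1.trans ?_
  have hp := Real.exp_pos (s - t)
  rw [← div_eq_mul_inv, ← mul_div_assoc, div_le_div_iff₀ (by positivity) (by positivity)]
  rcases le_total s t with h | h
  · nlinarith [mul_nonneg (sq_nonneg t) hp.le]
  · have hq := Real.quadratic_le_exp_of_nonneg (x := s - t) (by linarith)
    nlinarith [mul_nonneg (sq_nonneg t) hp.le, sq_nonneg (s - 2 * t)]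

lemma inv_one_add_sq_int : Integrable (fun s : ℝ => (1 + s ^ 2)⁻¹) := integrable_inv_one_add_sq

lemma exp_int (c : ℝ) (hc : 0 < c) : ∫ x in Set.Ioi (0:ℝ), Real.exp (-x * c) = 1 / c := by
  have := integral_exp_mul_Ioi (a := -c) (by linarith) 0
  simp only [mul_zero, Real.exp_zero, neg_div_neg_eq] at this
  rw [← this]
  congr 1 with x
  ring_nf

lemma exp_int' (c : ℝ) (hc : 0 < c) : IntegrableOn (fun x => Real.exp (-x * c)) (Set.Ioi (0:ℝ)) := by
  have := integrableOn_exp_mul_Ioi (a := -c) (by linarith) 0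
  simpa [mul_comm] using this
lemma triple_integrable (ν : ℝ) (h : ℝ → ℝ) (hc : Continuous h)
    (hI : Integrable (fun t => (1 + t ^ 2) * |h t|)) :
    Integrable (fun p : ℝ × ℝ × ℝ => Real.exp (-p.1 * Real.cosh p.2.1) * Real.sinh p.2.1 * h p.2.1 *
      (Real.exp (-p.1 * Real.cosh p.2.2) * Real.cos (ν * p.2.2)))
      ((volume.restrict (Set.Ioi (0:ℝ))).prod
        ((volume.restrict (Set.Ioi (0:ℝ))).prod (volume.restrict (Set.Ioi (0:ℝ))))) := by
  have heq : ∀ (x t s : ℝ), Real.exp (-x * Real.cosh t) * Real.sinh t * h t *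
      (Real.exp (-x * Real.cosh s) * Real.cos (ν * s)) =
      (Real.sinh t * h t * Real.cos (ν * s)) * Real.exp (-x * (Real.cosh s + Real.cosh t)) := by
    intro x t s
    rw [mul_add, Real.exp_add]; ring
  have hpos : ∀ s t : ℝ, 0 < Real.cosh s + Real.cosh t := fun s t =>
    add_pos (Real.cosh_pos s) (Real.cosh_pos t)
  rw [integrable_prod_iff' (Continuous.aestronglyMeasurable (by fun_prop))]
  constructor
  · refine ae_of_all _ fun y => ?_
    simp only [heq]
    exact (exp_int' _ (hpos _ _)).const_mul _
  · have e : (fun y : ℝ × ℝ => ∫ x in Set.Ioi (0:ℝ), ‖Real.exp (-x * Real.cosh y.1) * Real.sinh y.1 * h y.1 *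
      (Real.exp (-x * Real.cosh y.2) * Real.cos (ν * y.2))‖) =
      fun y => |Real.sinh y.1 * h y.1 * Real.cos (ν * y.2)| * (1 / (Real.cosh y.2 + Real.cosh y.1)) := by
      funext y
      simp only [heq, norm_mul _ (Real.exp _), Real.norm_of_nonneg (Real.exp_pos _).le]
      rw [integral_const_mul, exp_int _ (hpos _ _)]
      rfl
    simp only
    rw [e]
    have hdom := ((hI.restrict (s := Set.Ioi 0)).mul_prod
      (inv_one_add_sq_int.restrict (s := Set.Ioi 0))).const_mul 4
    refine hdom.mono' ?_ ?_
    · refine Continuous.aestronglyMeasurable ?_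
      have : ∀ y : ℝ × ℝ, Real.cosh y.2 + Real.cosh y.1 ≠ 0 := fun y => (hpos _ _).ne'
      fun_prop (disch := exact this _)
    · rw [Measure.prod_restrict]
      filter_upwards [ae_restrict_mem (measurableSet_Ioi.prod measurableSet_Ioi)] with y hy
      obtain ⟨h1, h2⟩ := hy
      have hb := kernel_bound y.2 y.1 h2 h1
      have hsh : 0 < Real.sinh y.1 := Real.sinh_pos_iff.2 h1
      have hp := hpos y.2 y.1
      rw [Real.norm_of_nonneg (by positivity), abs_mul, abs_mul, abs_of_pos hsh]
      calc _ ≤ Real.sinh y.1 * |h y.1| * 1 * (1 / (Real.cosh y.2 + Real.cosh y.1)) := by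
            gcongr
            exact Real.abs_cos_le_one _
        _ = |h y.1| * (Real.sinh y.1 / (Real.cosh y.2 + Real.cosh y.1)) := by ring
        _ ≤ |h y.1| * (4 * ((1 + y.1 ^ 2) * (1 + y.2 ^ 2)⁻¹)) := by gcongr
        _ = _ := by ring

lemma inner_eq (ν x : ℝ) (g : ℝ → ℝ) :
    ∫ y : ℝ × ℝ, Real.exp (-x * Real.cosh y.1) * Real.sinh y.1 * g y.1 *
      (Real.exp (-x * Real.cosh y.2) * Real.cos (ν * y.2))
      ∂((volume.restrict (Set.Ioi (0:ℝ))).prod (volume.restrict (Set.Ioi (0:ℝ)))) =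
    (∫ t in Set.Ioi (0:ℝ), Real.exp (-x * Real.cosh t) * Real.sinh t * g t) * Kim ν x :=
  integral_prod_mul (μ := volume.restrict (Set.Ioi (0:ℝ))) (ν := volume.restrict (Set.Ioi (0:ℝ)))
    (fun t => Real.exp (-x * Real.cosh t) * Real.sinh t * g t)
    (fun s => Real.exp (-x * Real.cosh s) * Real.cos (ν * s))

lemma total_eq (ν : ℝ) (hν : 0 < ν) (h : ℝ → ℝ) (hc : Continuous h)
    (hI : Integrable (fun t => (1 + t ^ 2) * |h t|)) :
    ∫ x in Set.Ioi (0:ℝ), (∫ t in Set.Ioi (0:ℝ), Real.exp (-x * Real.cosh t) * Real.sinh t * h t) * Kim ν x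
     = π / Real.sinh (π * ν) * ∫ t in Set.Ioi (0:ℝ), h t * Real.sin (ν * t) := by
  have hT := triple_integrable ν h hc hI
  have heq : ∀ (x t s : ℝ), Real.exp (-x * Real.cosh t) * Real.sinh t * h t *
      (Real.exp (-x * Real.cosh s) * Real.cos (ν * s)) =
      (Real.sinh t * h t * Real.cos (ν * s)) * Real.exp (-x * (Real.cosh s + Real.cosh t)) := by
    intro x t s
    rw [mul_add, Real.exp_add]; ring
  have hpos : ∀ s t : ℝ, 0 < Real.cosh s + Real.cosh t := fun s t =>
    add_pos (Real.cosh_pos s) (Real.cosh_pos t)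
  simp_rw [← inner_eq]
  rw [← integral_prod _ hT, integral_prod_symm _ hT, integral_prod _ hT.integral_prod_right,
    ← integral_const_mul]
  refine setIntegral_congr_fun measurableSet_Ioi fun t ht => ?_
  simp only [heq]
  have : ∀ s, ∫ x in Set.Ioi (0:ℝ), (Real.sinh t * h t * Real.cos (ν * s)) * Real.exp (-x * (Real.cosh s + Real.cosh t))
     = h t * (Real.cos (ν * s) * (Real.sinh t / (Real.cosh s + Real.cosh t))) := by
    intro s
    rw [integral_const_mul, exp_int _ (hpos _ _)]; ring
  simp_rw [this]
  rw [integral_const_mul, kernel_half ν t hν (le_of_lt ht)]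
  ring

lemma quad_integrable (ν ξ : ℝ) (hξ : 0 < ξ) (ψ : ℝ → ℝ) (hψ : Continuous ψ) (hi : Integrable ψ) :
    Integrable (fun q : ℝ × ℝ × ℝ × ℝ => Real.exp (-q.2.1 * Real.cosh q.2.2.1) * Real.sinh q.2.2.1 *
      (ψ q.1 * Real.sin (q.1 * q.2.2.1)) *
      (Real.exp (-q.2.1 * Real.cosh q.2.2.2) * Real.cos (ν * q.2.2.2)))
      ((volume.restrict (Set.Ioi (0:ℝ))).prod ((volume.restrict (Set.Ici ξ)).prod
        ((volume.restrict (Set.Ioi (0:ℝ))).prod (volume.restrict (Set.Ioi (0:ℝ)))))) := by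
  have i1 : Integrable (fun x => Real.exp (-x)) (volume.restrict (Set.Ici ξ)) := by
    have := exp_int' 1 one_pos
    simp only [mul_one] at this
    exact this.mono_set (fun x hx => lt_of_lt_of_le hξ hx)
  have i2 := (exp_cosh_integrable (ξ / 2) (by positivity)).restrict (s := Set.Ioi (0:ℝ))
  have hdom := (hi.norm.restrict (s := Set.Ioi (0:ℝ))).mul_prod (i1.mul_prod (i2.mul_prod i2))
  refine hdom.mono' (Continuous.aestronglyMeasurable (by fun_prop)) ?_
  rw [Measure.prod_restrict, Measure.prod_restrict, Measure.prod_restrict]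
  filter_upwards [ae_restrict_mem (measurableSet_Ioi.prod (measurableSet_Ici.prod
    (measurableSet_Ioi.prod measurableSet_Ioi)))] with q hq
  obtain ⟨v, x, t, s⟩ := q
  have hx : ξ ≤ x := hq.2.1
  simp only [norm_mul, Real.norm_of_nonneg (Real.exp_pos _).le]
  have hct := Real.one_le_cosh t
  have hcs := Real.one_le_cosh s
  have hexp : Real.exp (-x * Real.cosh t) * Real.exp (-x * Real.cosh s) ≤
      Real.exp (-x) * (Real.exp (-(ξ/2) * Real.cosh t) * Real.exp (-(ξ/2) * Real.cosh s)) := by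
    rw [← Real.exp_add, ← Real.exp_add, ← Real.exp_add]
    apply Real.exp_le_exp.2
    nlinarith
  calc _ = (Real.exp (-x * Real.cosh t) * Real.exp (-x * Real.cosh s)) *
        (|Real.sinh t| * (‖ψ v‖ * |Real.sin (v * t)|) * |Real.cos (ν * s)|) := by
        simp only [Real.norm_eq_abs]; ring
    _ ≤ (Real.exp (-x) * (Real.exp (-(ξ/2) * Real.cosh t) * Real.exp (-(ξ/2) * Real.cosh s))) *
        (Real.cosh t * (‖ψ v‖ * 1) * Real.cosh s) := by
        gcongr
        · exact abs_sinh_le_cosh t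
        · exact Real.abs_sin_le_one _
        · exact (Real.abs_cos_le_one _).trans hcs
    _ = _ := by ring

lemma fubini_eq (ν ξ : ℝ) (hξ : 0 < ξ) (ψ : ℝ → ℝ) (hψ : Continuous ψ) (hi : Integrable ψ)
    (φ : ℝ → ℝ) (hφ : ∀ v, 0 < v → φ v = ψ v * v) :
    ∫ v in Set.Ioi (0 : ℝ), φ v * ∫ x in Set.Ici ξ, Kim ν x * Kim v x / x =
    ∫ x in Set.Ici ξ, (∫ t in Set.Ioi (0:ℝ), Real.exp (-x * Real.cosh t) * Real.sinh t *
      ∫ v in Set.Ioi (0:ℝ), ψ v * Real.sin (v * t)) * Kim ν x := by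
  have hQ := quad_integrable ν ξ hξ ψ hψ hi
  have hR := hQ.integral_prod_right
  have step1 : ∫ v in Set.Ioi (0 : ℝ), φ v * ∫ x in Set.Ici ξ, Kim ν x * Kim v x / x
      = ∫ v in Set.Ioi (0 : ℝ), ∫ y : ℝ × ℝ × ℝ, Real.exp (-y.1 * Real.cosh y.2.1) * Real.sinh y.2.1 *
      (ψ v * Real.sin (v * y.2.1)) * (Real.exp (-y.1 * Real.cosh y.2.2) * Real.cos (ν * y.2.2))
      ∂((volume.restrict (Set.Ici ξ)).prod
        ((volume.restrict (Set.Ioi (0:ℝ))).prod (volume.restrict (Set.Ioi (0:ℝ))))) := by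
    refine integral_congr_ae ?_
    filter_upwards [hQ.prod_right_ae, ae_restrict_mem measurableSet_Ioi] with v hv hv0
    rw [integral_prod _ hv, ← integral_const_mul]
    refine setIntegral_congr_fun measurableSet_Ici fun x hx => ?_
    have hx0 : 0 < x := lt_of_lt_of_le hξ hx
    simp only
    rw [inner_eq ν x (fun t => ψ v * Real.sin (v * t)), mul_div_assoc, Kim_div x v hx0 hv0, hφ v hv0]
    have : ∀ t, Real.exp (-x * Real.cosh t) * Real.sinh t * (ψ v * Real.sin (v * t)) =
      ψ v * (Real.exp (-x * Real.cosh t) * Real.sinh t * Real.sin (v * t)) := fun t => by ring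
    simp_rw [this]
    rw [integral_const_mul]
    have : v ≠ 0 := ne_of_gt hv0
    field_simp
  rw [step1, ← integral_prod _ hQ, integral_prod_symm _ hQ, integral_prod _ hR]
  refine integral_congr_ae (ae_of_all _ fun x => ?_)
  simp only
  rw [← inner_eq ν x (fun t => ∫ v in Set.Ioi (0:ℝ), ψ v * Real.sin (v * t))]
  refine integral_congr_ae (ae_of_all _ fun y => ?_)
  simp only
  rw [integral_mul_const, integral_const_mul]

theorem macdonald_orthogonality (ν : ℝ) (hν : 0 < ν) (φ : ℝ → ℝ)
    (hφ : ContDiff ℝ (⊤ : ℕ∞) φ) (hφc : HasCompactSupport φ)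
    (hsupp : tsupport φ ⊆ Set.Ioi (0 : ℝ)) :
    Tendsto (fun ξ : ℝ =>
        ∫ ν' in Set.Ioi (0 : ℝ), φ ν' * ∫ x in Set.Ici ξ, Kim ν x * Kim ν' x / x)
      (nhdsWithin 0 (Set.Ioi 0)) (nhds (π ^ 2 / (2 * ν * Real.sinh (π * ν)) * φ ν)) := by
  set ψ : ℝ → ℝ := fun v => φ v * v⁻¹ with hψd
  have hψ : ContDiff ℝ (⊤ : ℕ∞) ψ := by
    rw [contDiff_iff_contDiffAt]
    intro v
    by_cases hv : v = 0
    · have h0 : v ∉ tsupport φ := fun h => by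
        have := hsupp h
        rw [hv] at this
        exact lt_irrefl (0:ℝ) this
      have h1 : ψ =ᶠ[nhds v] fun _ => 0 := by
        filter_upwards [notMem_tsupport_iff_eventuallyEq.1 h0] with w hw
        simp [hψd, hw]
      exact contDiffAt_const.congr_of_eventuallyEq h1
    · exact hφ.contDiffAt.mul (contDiffAt_inv ℝ hv)
  have hψc : HasCompactSupport ψ := hφc.mul_right
  have hψ0 : ∀ v ≤ 0, ψ v = 0 := by
    intro v hv
    have : φ v = 0 := image_eq_zero_of_notMem_tsupport fun h => not_lt.2 hv (hsupp h)
    simp [hψd, this]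
  have hψi : Integrable ψ := hψ.continuous.integrable_of_hasCompactSupport hψc
  obtain ⟨hc, hI, hinv⟩ := sine_transform ψ hψ hψc hψ0 _ rfl
  have hval := total_eq ν hν _ hc hI
  have hint := (triple_integrable ν _ hc hI).integral_prod_left
  simp only [inner_eq ν _ (fun t => ∫ v in Set.Ioi (0:ℝ), ψ v * Real.sin (v * t))] at hint
  rw [hinv ν hν] at hval
  have hfin : π / Real.sinh (π * ν) * (π / 2 * ψ ν) = π ^ 2 / (2 * ν * Real.sinh (π * ν)) * φ ν := by
    simp only [hψd]
    have : Real.sinh (π * ν) ≠ 0 := (Real.sinh_pos_iff.2 (by positivity)).ne'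
    field_simp
  rw [hfin] at hval
  have hcov : AECover (volume.restrict (Set.Ioi (0:ℝ))) (nhdsWithin (0:ℝ) (Set.Ioi 0)) (fun ξ => Set.Ici ξ) :=
    aecover_Ioi_of_Ici (a := fun ξ => ξ) (tendsto_nhdsWithin_of_tendsto_nhds tendsto_id)
  have hlim := hcov.integral_tendsto_of_countably_generated hint
  rw [hval] at hlim
  refine hlim.congr' ?_
  filter_upwards [self_mem_nhdsWithin] with ξ hξ
  have hξ0 : 0 < ξ := hξ
  rw [fubini_eq ν ξ hξ0 ψ hψ.continuous hψi φ (fun v hv => by simp [hψd, hv.ne'])]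
  rw [Measure.restrict_restrict measurableSet_Ici,
    Set.inter_eq_left.2 (show Set.Ici ξ ⊆ Set.Ioi 0 from fun x hx => lt_of_lt_of_le hξ0 hx)]
end

section
/- For all real ν, ν' with ν ≠ ν', ν ≠ −ν', and every ξ > 0: ∫_ξ^∞ K_{iν}(x) K_{iν'}(x)/x dx = − ξ · ( K_{iν}(ξ) · K_{iν'}'(ξ) − K_{iν'}(ξ) · K_{iν}'(ξ) ) / (ν² − ν'²), where ' denotes differentiation with respect to the argument. -/
open Real MeasureTheory

open Filter Topology Set

noncomputable def Mn (ν : ℝ) (n : ℕ) (x : ℝ) : ℝ :=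
  ∫ t in Set.Ioi (0 : ℝ), Real.cosh t ^ n * Real.exp (-x * Real.cosh t) * Real.cos (ν * t)

lemma self_le_cosh (t : ℝ) : t ≤ Real.cosh t := by
  have h := Real.cosh_eq t
  have h1 := Real.add_one_le_exp (t/2)
  have h3 : Real.exp t = Real.exp (t/2) * Real.exp (t/2) := by
    rw [← Real.exp_add]; ring_nf
  have h4 : Real.exp (-t) = Real.exp (-t/2) * Real.exp (-t/2) := by
    rw [← Real.exp_add]; ring_nf
  have h5 : Real.exp (t/2) * Real.exp (-t/2) = 1 := by
    rw [← Real.exp_add]; ring_nf; simp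
  by_cases ht : t ≤ 1
  · exact ht.trans (Real.one_le_cosh t)
  · have h6 := Real.quadratic_le_exp_of_nonneg (x := t) (by linarith)
    have h7 := Real.exp_pos (-t)
    have h8 := Real.sum_le_exp_of_nonneg (x := t) (by linarith) 4
    simp [Finset.sum_range_succ, Nat.factorial] at h8
    nlinarith [sq_nonneg (t-1), sq_nonneg (t-2), mul_nonneg (by linarith : (0:ℝ) ≤ t) (sq_nonneg (t-2))]

lemma pow_cosh_bound (n : ℕ) (a : ℝ) (ha : 0 < a) (t : ℝ) :
    Real.cosh t ^ n * Real.exp (-a * Real.cosh t) ≤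
      (n.factorial / (a/2)^n) * Real.exp (-(a/2) * t) := by
  have hc := Real.cosh_pos t
  have h := Real.pow_div_factorial_le_exp (x := a/2 * Real.cosh t) (by positivity) n
  have h1 : Real.cosh t ^ n ≤ (n.factorial / (a/2)^n) * Real.exp (a/2 * Real.cosh t) := by
    rw [mul_pow, div_le_iff₀ (by positivity)] at h
    rw [div_mul_eq_mul_div, le_div_iff₀ (by positivity)]
    linarith
  calc Real.cosh t ^ n * Real.exp (-a * Real.cosh t)
      ≤ ((n.factorial / (a/2)^n) * Real.exp (a/2 * Real.cosh t)) * Real.exp (-a * Real.cosh t) := by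
        gcongr
    _ = (n.factorial / (a/2)^n) * Real.exp (-(a/2) * Real.cosh t) := by
        rw [mul_assoc, ← Real.exp_add]; ring_nf
    _ ≤ _ := by
        gcongr ?_ * Real.exp ?_
        nlinarith [self_le_cosh t]

lemma int_pow_cosh (n : ℕ) (a : ℝ) (ha : 0 < a) :
    IntegrableOn (fun t => Real.cosh t ^ n * Real.exp (-a * Real.cosh t)) (Ioi 0) := by
  have h := (integrableOn_exp_mul_Ioi (a := -(a/2)) (by linarith) 0).const_mul
    ((n.factorial / (a/2)^n : ℝ))
  refine Integrable.mono' h (Continuous.aestronglyMeasurable (by fun_prop)) ?_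
  refine ae_of_all _ fun t => ?_
  have hc := Real.cosh_pos t
  rw [Real.norm_of_nonneg (by positivity)]
  exact pow_cosh_bound n a ha t

lemma norm_integrand_le (ν : ℝ) (n : ℕ) (x t : ℝ) :
    ‖Real.cosh t ^ n * Real.exp (-x * Real.cosh t) * Real.cos (ν * t)‖ ≤
      Real.cosh t ^ n * Real.exp (-x * Real.cosh t) := by
  have hc := Real.cosh_pos t
  rw [norm_mul, Real.norm_of_nonneg (by positivity)]
  exact mul_le_of_le_one_right (by positivity) (Real.abs_cos_le_one _)

lemma int_Mn (ν : ℝ) (n : ℕ) (a : ℝ) (ha : 0 < a) :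
    IntegrableOn (fun t => Real.cosh t ^ n * Real.exp (-a * Real.cosh t) * Real.cos (ν * t))
      (Ioi 0) :=
  Integrable.mono' (int_pow_cosh n a ha) (Continuous.aestronglyMeasurable (by fun_prop))
    (ae_of_all _ fun t => norm_integrand_le ν n a t)

lemma hasDerivAt_Mn (ν : ℝ) (n : ℕ) (x : ℝ) (hx : 0 < x) :
    HasDerivAt (Mn ν n) (-Mn ν (n+1) x) x := by
  have key := hasDerivAt_integral_of_dominated_loc_of_deriv_le (μ := volume.restrict (Ioi (0:ℝ)))
    (F := fun x t => Real.cosh t ^ n * Real.exp (-x * Real.cosh t) * Real.cos (ν * t))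
    (F' := fun x t => -(Real.cosh t ^ (n+1) * Real.exp (-x * Real.cosh t) * Real.cos (ν * t)))
    (bound := fun t => Real.cosh t ^ (n+1) * Real.exp (-(x/2) * Real.cosh t))
    (x₀ := x) (s := Ioi (x/2)) (Ioi_mem_nhds (by linarith))
    (Eventually.of_forall fun y => Continuous.aestronglyMeasurable (by fun_prop))
    (int_Mn ν n x hx) (Continuous.aestronglyMeasurable (by fun_prop))
    (ae_of_all _ fun t y hy => ?_) (int_pow_cosh (n+1) (x/2) (by linarith))
    (ae_of_all _ fun t y hy => ?_)
  · have h2 := key.2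
    rw [integral_neg] at h2
    exact h2
  · rw [norm_neg]
    refine (norm_integrand_le ν (n+1) y t).trans ?_
    have hc := Real.cosh_pos t
    have hy' : x/2 < y := hy
    gcongr
  · have h1 : HasDerivAt (fun y : ℝ => -y * Real.cosh t) (-1 * Real.cosh t) y :=
      ((hasDerivAt_id y).neg).mul_const _
    refine ((h1.exp.const_mul (Real.cosh t ^ n)).mul_const (Real.cos (ν * t))).congr_deriv ?_
    ring

lemma Mn_bound (ν : ℝ) (n : ℕ) (ξ : ℝ) (hξ : 0 < ξ) :
    ∃ C, 0 ≤ C ∧ ∀ x, ξ ≤ x → |Mn ν n x| ≤ C * Real.exp (-(x - ξ)) := by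
  refine ⟨∫ t in Ioi (0:ℝ), Real.cosh t ^ n * Real.exp (-ξ * Real.cosh t),
    integral_nonneg fun t => ?_, fun x hx => ?_⟩
  · have hc := Real.cosh_pos t
    simp only [Pi.zero_apply]
    positivity
  · rw [← integral_mul_const, Mn, ← Real.norm_eq_abs]
    refine norm_integral_le_of_norm_le ((int_pow_cosh n ξ hξ).mul_const _)
      (ae_of_all _ fun t => (norm_integrand_le ν n x t).trans ?_)
    have hc := Real.one_le_cosh t
    rw [mul_assoc, ← Real.exp_add]
    gcongr
    nlinarith

lemma Mn_ode (ν x : ℝ) (hx : 0 < x) :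
    x^2 * Mn ν 2 x - x * Mn ν 1 x - x^2 * Mn ν 0 x + ν^2 * Mn ν 0 x = 0 := by
  have i0 := int_Mn ν 0 x hx
  have i1 := int_Mn ν 1 x hx
  have i2 := int_Mn ν 2 x hx
  have hd : ∀ t : ℝ, HasDerivAt
      (fun t => Real.exp (-x * Real.cosh t) * (-x * Real.sinh t * Real.cos (ν * t) + ν * Real.sin (ν * t)))
      (x^2 * (Real.cosh t ^ 2 * Real.exp (-x * Real.cosh t) * Real.cos (ν * t))
        - x * (Real.cosh t ^ 1 * Real.exp (-x * Real.cosh t) * Real.cos (ν * t))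
        - x^2 * (Real.cosh t ^ 0 * Real.exp (-x * Real.cosh t) * Real.cos (ν * t))
        + ν^2 * (Real.cosh t ^ 0 * Real.exp (-x * Real.cosh t) * Real.cos (ν * t))) t := by
    intro t
    have hl : HasDerivAt (fun t : ℝ => ν * t) ν t := by
      simpa using (hasDerivAt_id t).const_mul ν
    have h1 := ((Real.hasDerivAt_cosh t).const_mul (-x)).exp
    have h2 := ((Real.hasDerivAt_sinh t).const_mul (-x)).mul hl.cos
    have h3 := h1.mul (h2.add (hl.sin.const_mul ν))
    refine HasDerivAt.congr_deriv h3 ?_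
    have := Real.cosh_sq t
    simp only [Pi.mul_apply, Pi.add_apply]
    rw [this]
    ring
  have lim0 : ∀ n : ℕ, Tendsto (fun t => Real.cosh t ^ n * Real.exp (-x * Real.cosh t)) atTop (𝓝 0) := by
    intro n
    refine squeeze_zero (fun t => ?_) (fun t => pow_cosh_bound n x hx t) ?_
    · have hc := Real.cosh_pos t
      positivity
    · have : Tendsto (fun t : ℝ => -(x/2) * t) atTop atBot :=
        tendsto_id.const_mul_atTop_of_neg (by linarith)
      simpa using (Real.tendsto_exp_atBot.comp this).const_mul ((n.factorial / (x/2)^n : ℝ))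
  have hlim : Tendsto (fun t => Real.exp (-x * Real.cosh t) * (-x * Real.sinh t * Real.cos (ν * t) + ν * Real.sin (ν * t))) atTop (𝓝 0) := by
    have hb : Tendsto (fun t => x * (Real.cosh t ^ 1 * Real.exp (-x * Real.cosh t)) + |ν| * (Real.cosh t ^ 0 * Real.exp (-x * Real.cosh t))) atTop (𝓝 0) := by
      simpa using ((lim0 1).const_mul x).add ((lim0 0).const_mul |ν|)
    refine squeeze_zero_norm (fun t => ?_) hb
    have hs : |Real.sinh t| ≤ Real.cosh t := by
      refine abs_le_of_sq_le_sq ?_ (Real.cosh_pos t).le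
      have := Real.cosh_sq t
      linarith
    have e1 : |-x * Real.sinh t * Real.cos (ν * t)| ≤ x * Real.cosh t := by
      rw [abs_mul, abs_mul, abs_neg, abs_of_pos hx]
      calc _ ≤ x * |Real.sinh t| * 1 := by gcongr; exact Real.abs_cos_le_one _
        _ ≤ _ := by rw [mul_one]; gcongr
    have e2 : |ν * Real.sin (ν * t)| ≤ |ν| := by
      rw [abs_mul]
      exact mul_le_of_le_one_right (abs_nonneg _) (Real.abs_sin_le_one _)
    rw [norm_mul, Real.norm_of_nonneg (Real.exp_pos _).le, Real.norm_eq_abs]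
    calc _ ≤ Real.exp (-x * Real.cosh t) * (x * Real.cosh t + |ν|) := by
          gcongr
          exact (abs_add_le _ _).trans (add_le_add e1 e2)
      _ = _ := by ring
  have j2 := i2.const_mul (x^2)
  have j1 := i1.const_mul x
  have j0 := i0.const_mul (x^2)
  have j0' := i0.const_mul (ν^2)
  have h := integral_Ioi_of_hasDerivAt_of_tendsto' (a := 0) (fun t _ => hd t)
    (((j2.sub j1).sub j0).add j0') hlim
  rw [integral_add (by exact (j2.sub j1).sub j0) j0', integral_sub (by exact j2.sub j1) j0,
    integral_sub j2 j1] at h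
  simp only [integral_const_mul] at h
  simpa [Mn] using h

lemma Kim_eq (ν : ℝ) : Kim ν = Mn ν 0 := by
  funext x
  simp [Kim, Mn]

theorem macdonald_integral_boundary_formula (ν ν' ξ : ℝ) (hξ : 0 < ξ)
    (h1 : ν ≠ ν') (h2 : ν ≠ -ν') :
    ∫ x in Set.Ici ξ, Kim ν x * Kim ν' x / x =
      -ξ * (Kim ν ξ * deriv (Kim ν') ξ - Kim ν' ξ * deriv (Kim ν) ξ) /
        (ν ^ 2 - ν' ^ 2) := by
  have hne : ν^2 - ν'^2 ≠ 0 := by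
    intro h
    have : (ν - ν') * (ν + ν') = 0 := by linarith
    rcases mul_eq_zero.mp this with h | h
    · exact h1 (by linarith)
    · exact h2 (by linarith)
  rw [Kim_eq, Kim_eq, (hasDerivAt_Mn ν 0 ξ hξ).deriv, (hasDerivAt_Mn ν' 0 ξ hξ).deriv,
    integral_Ici_eq_integral_Ioi]
  simp only [zero_add]
  obtain ⟨A0, hA0, bA0⟩ := Mn_bound ν 0 ξ hξ
  obtain ⟨A1, hA1, bA1⟩ := Mn_bound ν 1 ξ hξ
  obtain ⟨B0, hB0, bB0⟩ := Mn_bound ν' 0 ξ hξ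
  obtain ⟨B1, hB1, bB1⟩ := Mn_bound ν' 1 ξ hξ
  have hder : ∀ x ∈ Ici ξ, HasDerivAt
      (fun x => x * (Mn ν' 0 x * Mn ν 1 x - Mn ν 0 x * Mn ν' 1 x))
      ((ν^2 - ν'^2) * (Mn ν 0 x * Mn ν' 0 x / x)) x := by
    intro x hx
    have hx0 : 0 < x := hξ.trans_le hx
    have k := (hasDerivAt_id x).mul (((hasDerivAt_Mn ν' 0 x hx0).mul (hasDerivAt_Mn ν 1 x hx0)).sub
      ((hasDerivAt_Mn ν 0 x hx0).mul (hasDerivAt_Mn ν' 1 x hx0)))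
    refine HasDerivAt.congr_deriv k ?_
    have o1 := Mn_ode ν x hx0
    have o2 := Mn_ode ν' x hx0
    simp only [Pi.mul_apply, Pi.sub_apply, id, zero_add, Nat.reduceAdd]
    field_simp
    linear_combination (Mn ν 0 x) * o2 - (Mn ν' 0 x) * o1
  have hint : IntegrableOn (fun x => (ν^2 - ν'^2) * (Mn ν 0 x * Mn ν' 0 x / x)) (Ioi ξ) := by
    apply Integrable.const_mul
    have he : IntegrableOn (fun x => (A0 * B0 / ξ * Real.exp ξ) * Real.exp (-1 * x)) (Ioi ξ) :=
      (integrableOn_exp_mul_Ioi (a := -1) (by norm_num) ξ).const_mul _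
    refine Integrable.mono' he ?_ ?_
    · refine ContinuousOn.aestronglyMeasurable ?_ measurableSet_Ioi
      intro x hx
      have hx0 : 0 < x := hξ.trans hx
      exact (((hasDerivAt_Mn ν 0 x hx0).continuousAt.mul
        (hasDerivAt_Mn ν' 0 x hx0).continuousAt).div continuousAt_id hx0.ne').continuousWithinAt
    · refine (ae_restrict_iff' measurableSet_Ioi).mpr (ae_of_all _ fun x hx => ?_)
      have hx' : ξ ≤ x := le_of_lt hx
      have hx0 : 0 < x := hξ.trans hx
      have hle : Real.exp (-(x - ξ)) ≤ 1 := Real.exp_le_one_iff.mpr (by linarith)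
      rw [norm_div, norm_mul, Real.norm_of_nonneg hx0.le, Real.norm_eq_abs, Real.norm_eq_abs]
      calc |Mn ν 0 x| * |Mn ν' 0 x| / x
          ≤ (A0 * Real.exp (-(x - ξ))) * (B0 * 1) / ξ := by
            gcongr
            · exact bA0 x hx'
            · exact (bB0 x hx').trans (by gcongr)
        _ = (A0 * B0 / ξ) * Real.exp (ξ + -1 * x) := by
            rw [show -(x - ξ) = ξ + -1 * x by ring]; ring
        _ = _ := by rw [Real.exp_add]; ring
  have hlim : Tendsto (fun x => x * (Mn ν' 0 x * Mn ν 1 x - Mn ν 0 x * Mn ν' 1 x)) atTop (𝓝 0) := by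
    have hb : Tendsto (fun x : ℝ => ((B0 * A1 + A0 * B1) * Real.exp ξ) * (x ^ 1 * Real.exp (-x))) atTop (𝓝 0) := by
      simpa using (Real.tendsto_pow_mul_exp_neg_atTop_nhds_zero 1).const_mul ((B0 * A1 + A0 * B1) * Real.exp ξ)
    refine squeeze_zero_norm' ?_ hb
    filter_upwards [eventually_ge_atTop ξ] with x hx'
    have hx0 : 0 < x := hξ.trans_le hx'
    have hle : Real.exp (-(x - ξ)) ≤ 1 := Real.exp_le_one_iff.mpr (by linarith)
    have e1 : |Mn ν' 0 x * Mn ν 1 x| ≤ (B0 * Real.exp (-(x - ξ))) * (A1 * 1) := by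
      rw [abs_mul]
      gcongr
      · exact bB0 x hx'
      · exact (bA1 x hx').trans (by gcongr)
    have e2 : |Mn ν 0 x * Mn ν' 1 x| ≤ (A0 * Real.exp (-(x - ξ))) * (B1 * 1) := by
      rw [abs_mul]
      gcongr
      · exact bA0 x hx'
      · exact (bB1 x hx').trans (by gcongr)
    rw [norm_mul, Real.norm_of_nonneg hx0.le, Real.norm_eq_abs]
    calc _ ≤ x * ((B0 * Real.exp (-(x - ξ))) * (A1 * 1) + (A0 * Real.exp (-(x - ξ))) * (B1 * 1)) := by
          gcongr
          exact (abs_sub _ _).trans (add_le_add e1 e2)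
      _ = _ := by
          rw [show -(x - ξ) = ξ + -x by ring, Real.exp_add]; ring
  have h := integral_Ioi_of_hasDerivAt_of_tendsto' hder hint hlim
  rw [integral_const_mul] at h
  rw [eq_div_iff hne]
  linarith
end
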